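/- Fix r_1 < ... < r_k with d = gcd(r_1,...,r_k), and fix n > r_k² with M_n primitive. Let ρ be a minimal presentation of M_n (a minimal set of relations generating the congruence ker π_n). Then for any (z, z') ∈ ker π_n there exists a monotone ρ-chain from z to z': a sequence z = a_0, a_1, ..., a_r = z' with |a_0|, ..., |a_r| a monotone sequence, and for each i, (a_{i−1}, a_i) = (b_i, b_i') + (u_i, u_i) for some (b_i, b_i') ∈ ρ ∪ ρ^{-1} and u_i ∈ ℕ^{k+1}. -/

import Mathlib

open Finset

/-- Length of a factorization. -/
def vlen {m : ℕ} (z : Fin m → ℕ) : ℕ := ∑ i, z i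

/-- Factorization homomorphism of `M_n = ⟨n, n+r_1, ..., n+r_k⟩`. -/
def piM (k n : ℕ) (r : Fin (k + 1) → ℕ) (z : Fin (k + 2) → ℕ) : ℕ :=
  z 0 * n + ∑ i : Fin (k + 1), z i.succ * (n + r i)

/-- Two factorizations of `β` lie in the same connected component of the factorization
graph `∇_β`: there is a path of factorizations of `β`, consecutive ones sharing a
common positive coordinate. -/
def SameComp {m : ℕ} (π : (Fin m → ℕ) → ℕ) (β : ℕ) :
    (Fin m → ℕ) → (Fin m → ℕ) → Prop :=
  Relation.ReflTransGen (fun a b => π a = β ∧ π b = β ∧ ∃ i, 0 < a i ∧ 0 < b i)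

/-- `β` is a Betti element: its factorization graph is disconnected. -/
def IsBetti {m : ℕ} (π : (Fin m → ℕ) → ℕ) (β : ℕ) : Prop :=
  ∃ z z', π z = β ∧ π z' = β ∧ ¬ SameComp π β z z'

/-- The map `Φ_n` on pairs of factorizations. -/
def Phi (k : ℕ) (p : (Fin (k + 2) → ℕ) × (Fin (k + 2) → ℕ)) :
    (Fin (k + 2) → ℕ) × (Fin (k + 2) → ℕ) :=
  if vlen p.2 < vlen p.1 then
    (p.1 + (vlen p.1 - vlen p.2) • Pi.single (0 : Fin (k + 2)) 1,
     p.2 + (vlen p.1 - vlen p.2) • Pi.single (Fin.last (k + 1)) 1)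
  else if vlen p.1 < vlen p.2 then
    (p.1 + (vlen p.2 - vlen p.1) • Pi.single (Fin.last (k + 1)) 1,
     p.2 + (vlen p.2 - vlen p.1) • Pi.single (0 : Fin (k + 2)) 1)
  else p

/-- The congruence generated by a set of relations `ρ`. -/
inductive CongGen {m : ℕ} (ρ : Set ((Fin m → ℕ) × (Fin m → ℕ))) :
    (Fin m → ℕ) → (Fin m → ℕ) → Prop
  | of {z z'} : (z, z') ∈ ρ → CongGen ρ z z'
  | refl (z) : CongGen ρ z z
  | symm {z z'} : CongGen ρ z z' → CongGen ρ z' z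
  | trans {x y z} : CongGen ρ x y → CongGen ρ y z → CongGen ρ x z
  | add {z z'} (u) : CongGen ρ z z' → CongGen ρ (z + u) (z' + u)

/-- `ρ` is a presentation for the monoid with factorization homomorphism `π`. -/
def IsPres {m : ℕ} (π : (Fin m → ℕ) → ℕ)
    (ρ : Set ((Fin m → ℕ) × (Fin m → ℕ))) : Prop :=
  (∀ p ∈ ρ, π p.1 = π p.2) ∧ ∀ z z', CongGen ρ z z' ↔ π z = π z'

/-- `ρ` is a minimal presentation. -/
def IsMinPres {m : ℕ} (π : (Fin m → ℕ) → ℕ)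
    (ρ : Set ((Fin m → ℕ) × (Fin m → ℕ))) : Prop :=
  IsPres π ρ ∧ ∀ ρ' ⊆ ρ, IsPres π ρ' → ρ' = ρ

/-- Primitivity of `M_n`: the gcd of the generators is 1. -/
def Primitive (k n : ℕ) (r : Fin (k + 1) → ℕ) : Prop :=
  Nat.gcd n (Finset.univ.gcd fun i : Fin (k + 1) => n + r i) = 1

/-- Distance between two factorizations. -/
def fdist {m : ℕ} (z z' : Fin m → ℕ) : ℕ :=
  max (∑ i, (z i - min (z i) (z' i))) (∑ i, (z' i - min (z i) (z' i)))

/-!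
Write `a` and `b` for the smallest and the largest generator, so that `(b - a) ^ 2 < a`. If some
factorization of the same element is longer than `z`, then the atoms of `z` exceed `a` by at least
`a` in total, hence more than `b - a` of them differ from `a`. By the pigeonhole principle, at most
`b - a` of these have total excess divisible by `b - a`; replacing them by copies of `a` and `b`
gives a factorization of the same length which contains `b` and still shares an atom with `z`.
Symmetrically, a factorization that is not of minimal length can be changed into one containing `a`.

Two factorizations sharing an atom are joined by a chain of non-increasing length, by induction on
the element: cancel the atom. Hence so are any two that are both not of maximal length, or both not
of minimal length. The remaining case is that of a factorization of maximal length and one of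
minimal length; there the required drop is taken from the step at which an arbitrary chain between
the two first reaches the minimal length.
-/

lemma exists_eq_add_single {ι : Type*} [DecidableEq ι] {z : ι → ℕ} {i : ι} (hi : 0 < z i) :
    ∃ x : ι → ℕ, z = x + Pi.single i 1 := by
  have hle : Pi.single i 1 ≤ z := by
    intro j
    rcases eq_or_ne j i with rfl | hj
    · rwa [Pi.single_eq_same, Nat.succ_le_iff]
    · simp only [Pi.single_eq_of_ne hj, zero_le]
  obtain ⟨x, hx⟩ := exists_add_of_le hle
  exact ⟨x, hx.trans (add_comm _ _)⟩

section Length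

variable {m : ℕ}

lemma vlen_eq_dotProduct_one (z : Fin m → ℕ) : vlen z = z ⬝ᵥ 1 := (dotProduct_one z).symm

lemma vlen_add (x y : Fin m → ℕ) : vlen (x + y) = vlen x + vlen y := by
  simp only [vlen_eq_dotProduct_one, add_dotProduct]

lemma vlen_single (i : Fin m) (a : ℕ) : vlen (Pi.single i a) = a := by
  simp only [vlen_eq_dotProduct_one, single_dotProduct, Pi.one_apply, mul_one]

lemma vlen_sum {ι : Type*} (s : Finset ι) (e : ι → Fin m → ℕ) :
    vlen (∑ j ∈ s, e j) = ∑ j ∈ s, vlen (e j) := by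
  simp only [vlen_eq_dotProduct_one, sum_dotProduct]

lemma vlen_mono {x y : Fin m → ℕ} (h : x ≤ y) : vlen x ≤ vlen y :=
  Finset.sum_le_sum fun i _ ↦ h i

lemma exists_pos_of_vlen_pos {z : Fin m → ℕ} (h : 0 < vlen z) : ∃ i, 0 < z i := by
  obtain ⟨i, -, hi⟩ := Finset.exists_ne_zero_of_sum_ne_zero h.ne'
  exact ⟨i, Nat.pos_of_ne_zero hi⟩

lemma dotProduct_const (z : Fin m → ℕ) (a : ℕ) : (z ⬝ᵥ fun _ ↦ a) = vlen z * a :=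
  (Finset.sum_mul ..).symm

lemma dotProduct_le_vlen_mul {c : Fin m → ℕ} {R : ℕ} (hc : ∀ i, c i ≤ R) (z : Fin m → ℕ) :
    z ⬝ᵥ c ≤ vlen z * R :=
  dotProduct_const z R ▸ dotProduct_le_dotProduct_of_nonneg_left hc fun i ↦ (z i).zero_le

lemma dotProduct_add_dotProduct_of_add_eq {c c' : Fin m → ℕ} {a : ℕ} (h : ∀ i, c i + c' i = a)
    (z : Fin m → ℕ) : z ⬝ᵥ c + z ⬝ᵥ c' = vlen z * a := by
  rw [← dotProduct_add, ← dotProduct_const]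
  exact congrArg (z ⬝ᵥ ·) (funext h)

lemma dotProduct_of_eq_add {c g : Fin m → ℕ} {a : ℕ} (h : ∀ i, g i = c i + a) (z : Fin m → ℕ) :
    z ⬝ᵥ g = z ⬝ᵥ c + vlen z * a := by
  rw [← dotProduct_const, ← dotProduct_add]
  exact congrArg (z ⬝ᵥ ·) (funext h)

lemma exists_eq_sum_range_vlen_eq_one {N : ℕ} {z : Fin m → ℕ} (hz : vlen z = N) :
    ∃ e : ℕ → Fin m → ℕ, (∀ j < N, vlen (e j) = 1) ∧ z = ∑ j ∈ range N, e j := by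
  induction N generalizing z with
  | zero =>
    refine ⟨0, by simp only [not_lt_zero, false_imp_iff, implies_true], funext fun i ↦ ?_⟩
    exact Finset.sum_eq_zero_iff.1 hz i (mem_univ i)
  | succ N ih =>
    obtain ⟨i, hi⟩ := exists_pos_of_vlen_pos (z := z) (by omega)
    obtain ⟨x, rfl⟩ := exists_eq_add_single hi
    rw [vlen_add, vlen_single, Nat.add_right_cancel_iff] at hz
    obtain ⟨e, he, rfl⟩ := ih hz
    refine ⟨Function.update e N (Pi.single i 1), fun j hj ↦ ?_, ?_⟩
    · rcases Nat.lt_succ_iff_lt_or_eq.1 hj with hj | rfl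
      · rw [Function.update_of_ne hj.ne, he j hj]
      · rw [Function.update_self, vlen_single]
    · rw [sum_range_succ, Function.update_self, sum_update_of_notMem notMem_range_self]

end Length

section ZeroSum

lemma exists_sum_Ico_eq_zero {G : Type*} [AddCommGroup G] [Fintype G] (f : ℕ → G) :
    ∃ a b, a < b ∧ b ≤ Fintype.card G ∧ ∑ j ∈ Ico a b, f j = 0 := by
  obtain ⟨a, b, hne, hab⟩ := Fintype.exists_ne_map_eq_of_card_lt
    (fun i : Fin (Fintype.card G + 1) ↦ ∑ j ∈ range i, f j) (by simp)
  wlog hlt : a < b generalizing a b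
  · exact this b a hne.symm hab.symm (hne.symm.lt_of_le (not_lt.1 hlt))
  exact ⟨a, b, hlt, Nat.lt_succ_iff.1 b.2, by rw [sum_Ico_eq_sub _ hlt.le, hab, sub_self]⟩

variable {m : ℕ}

lemma exists_le_dvd_dotProduct {R : ℕ} (hR : 0 < R) (c : Fin m → ℕ) {y : Fin m → ℕ}
    (hy : R ≤ vlen y) : ∃ q ≤ y, 0 < vlen q ∧ vlen q ≤ R ∧ R ∣ q ⬝ᵥ c := by
  have : NeZero R := ⟨hR.ne'⟩
  obtain ⟨e, he, hsum⟩ := exists_eq_sum_range_vlen_eq_one (z := y) rfl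
  obtain ⟨a, b, hab, hbR, hzero⟩ := exists_sum_Ico_eq_zero fun j ↦ ((e j ⬝ᵥ c : ℕ) : ZMod R)
  rw [ZMod.card] at hbR
  have hlen : vlen (∑ j ∈ Ico a b, e j) = b - a := by
    rw [vlen_sum, sum_congr rfl fun j hj ↦ he j (by grind), sum_const, Nat.card_Ico, smul_eq_mul,
      mul_one]
  refine ⟨∑ j ∈ Ico a b, e j, ?_, by omega, by omega, ?_⟩
  · rw [hsum]
    exact sum_le_sum_of_subset (by grind)
  · rwa [sum_dotProduct, ← ZMod.natCast_eq_zero_iff, Nat.cast_sum]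

lemma exists_le_dotProduct_eq_mul {c : Fin m → ℕ} {R : ℕ} (hc : ∀ i, c i ≤ R) {z : Fin m → ℕ}
    (hz : R ^ 2 < z ⬝ᵥ c) :
    ∃ q ≤ z, vlen q < vlen z ∧ ∃ M, 0 < M ∧ M ≤ vlen q ∧ q ⬝ᵥ c = M * R := by
  -- Atoms of weight `0` are discarded, since they alone would only give `M = 0`.
  let y : Fin m → ℕ := fun i ↦ if c i = 0 then 0 else z i
  have hyz : y ≤ z := fun i ↦ by dsimp only [y]; split_ifs <;> simp
  have hyc : y ⬝ᵥ c = z ⬝ᵥ c := sum_congr rfl fun i _ ↦ by dsimp only [y]; split_ifs <;> simp [*]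
  have hlt : R * R < vlen y * R :=
    calc R * R = R ^ 2 := (sq R).symm
      _ < y ⬝ᵥ c := hyc ▸ hz
      _ ≤ vlen y * R := dotProduct_le_vlen_mul hc y
  have hR : 0 < R := Nat.pos_of_ne_zero fun h ↦ by simp [h] at hlt
  have hlen : R < vlen y := Nat.lt_of_mul_lt_mul_right hlt
  obtain ⟨q, hqy, hq, hqR, M, hM⟩ := exists_le_dvd_dotProduct hR c hlen.le
  rw [mul_comm] at hM
  have hpos : 0 < q ⬝ᵥ c := by
    obtain ⟨i, hi⟩ := exists_pos_of_vlen_pos hq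
    have hci : c i ≠ 0 := fun h ↦ (hi.trans_le (hqy i)).ne' (if_pos h)
    exact sum_pos' (fun _ _ ↦ Nat.zero_le _)
      ⟨i, mem_univ i, Nat.mul_pos hi (Nat.pos_of_ne_zero hci)⟩
  exact ⟨q, hqy.trans hyz, hqR.trans_lt (hlen.trans_le (vlen_mono hyz)), M,
    Nat.pos_of_mul_pos_right (hM ▸ hpos),
    Nat.le_of_mul_le_mul_right (hM ▸ dotProduct_le_vlen_mul hc q) hR, hM⟩

end ZeroSum

section Exchange

variable {m : ℕ} {g : Fin m → ℕ} {s t : Fin m}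

/-- Two factorizations have a common atom, i.e. they are adjacent in the factorization graph. -/
def ShareAtom (x y : Fin m → ℕ) : Prop := ∃ i, 0 < x i ∧ 0 < y i

lemma ShareAtom.symm {x y : Fin m → ℕ} (h : ShareAtom x y) : ShareAtom y x :=
  h.imp fun _ ↦ And.symm

/-- For generators `g`, the factorization `z` can be replaced by a factorization of the same
element that has the same length, uses the generator `g i`, and shares an atom with `z`. -/
def ExchangesTo (g : Fin m → ℕ) (i : Fin m) (z : Fin m → ℕ) : Prop :=
  ∃ w, vlen w = vlen z ∧ w ⬝ᵥ g = z ⬝ᵥ g ∧ 0 < w i ∧ ShareAtom z w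

lemma exchangesTo_of_sq_lt_dotProduct {c : Fin m → ℕ} (hs : c s = 0) (ht : ∀ i, c i ≤ c t)
    {z : Fin m → ℕ} (hz : c t ^ 2 < z ⬝ᵥ c) : ExchangesTo c t z := by
  obtain ⟨q, hqz, hlt, M, hM, hMq, hqc⟩ := exists_le_dotProduct_eq_mul ht hz
  obtain ⟨x, rfl⟩ := exists_add_of_le hqz
  rw [vlen_add] at hlt
  obtain ⟨j, hj⟩ := exists_pos_of_vlen_pos (z := x) (by omega)
  refine ⟨Pi.single t M + Pi.single s (vlen q - M) + x, ?_, ?_, ?_, j, ?_, ?_⟩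
  · simp only [vlen_add, vlen_single, Nat.add_sub_cancel' hMq]
  · simp only [add_dotProduct, single_dotProduct, hs, mul_zero, add_zero, hqc]
  · simp only [Pi.add_apply, Pi.single_eq_same]; omega
  · exact hj.trans_le (Nat.le_add_left ..)
  · exact hj.trans_le (Nat.le_add_left ..)

lemma exchangesTo_max (hs : ∀ i, g s ≤ g i) (ht : ∀ i, g i ≤ g t) (hg : (g t - g s) ^ 2 < g s)
    {z w : Fin m → ℕ} (h : z ⬝ᵥ g = w ⬝ᵥ g) (hlt : vlen z < vlen w) : ExchangesTo g t z := by
  have hexcess := dotProduct_of_eq_add fun i ↦ (Nat.sub_add_cancel (hs i)).symm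
  have hz : g s ≤ z ⬝ᵥ fun i ↦ g i - g s := by
    rw [hexcess z, hexcess w] at h
    nlinarith
  obtain ⟨x, hlen, hx, hxt, hzx⟩ := exchangesTo_of_sq_lt_dotProduct (Nat.sub_self _)
    (fun i ↦ Nat.sub_le_sub_right (ht i) (g s)) (hg.trans_le hz)
  exact ⟨x, hlen, by rw [hexcess, hexcess, hx, hlen], hxt, hzx⟩

lemma exchangesTo_min (hs : ∀ i, g s ≤ g i) (ht : ∀ i, g i ≤ g t) (hg : (g t - g s) ^ 2 < g s)
    {z w : Fin m → ℕ} (h : z ⬝ᵥ g = w ⬝ᵥ g) (hlt : vlen w < vlen z) : ExchangesTo g s z := by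
  have hdefect := dotProduct_add_dotProduct_of_add_eq fun i ↦ Nat.sub_add_cancel (ht i)
  have hz : g s ≤ z ⬝ᵥ fun i ↦ g t - g i := by
    have := hdefect z
    have := hdefect w
    have := hs t
    nlinarith
  obtain ⟨x, hlen, hx, hxs, hzx⟩ := exchangesTo_of_sq_lt_dotProduct (Nat.sub_self _)
    (fun i ↦ Nat.sub_le_sub_left (hs i) (g t)) (hg.trans_le hz)
  refine ⟨x, hlen, Nat.add_left_cancel (n := z ⬝ᵥ fun i ↦ g t - g i) ?_, hxs, hzx⟩
  rw [hdefect, ← hlen, ← hdefect x, hx]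

end Exchange

section Chain

variable {m : ℕ} {ρ : Set ((Fin m → ℕ) × (Fin m → ℕ))} {π : (Fin m → ℕ) → ℕ} {x y : Fin m → ℕ}

/-- `x` and `y` are consecutive elements of a `ρ`-chain. -/
def ChainStep (ρ : Set ((Fin m → ℕ) × (Fin m → ℕ))) (x y : Fin m → ℕ) : Prop :=
  ∃ b b' u, ((b, b') ∈ ρ ∨ (b', b) ∈ ρ) ∧ x = b + u ∧ y = b' + u

lemma ChainStep.symm (h : ChainStep ρ x y) : ChainStep ρ y x := by
  obtain ⟨b, b', u, hb, hx, hy⟩ := h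
  exact ⟨b', b, u, hb.symm, hy, hx⟩

instance : Std.Symm (ChainStep ρ) := ⟨fun _ _ ↦ ChainStep.symm⟩

lemma ChainStep.add (h : ChainStep ρ x y) (v : Fin m → ℕ) : ChainStep ρ (x + v) (y + v) := by
  obtain ⟨b, b', u, hb, rfl, rfl⟩ := h
  exact ⟨b, b', u + v, hb, add_assoc .., add_assoc ..⟩

lemma ChainStep.congGen (h : ChainStep ρ x y) : CongGen ρ x y := by
  obtain ⟨b, b', u, hb | hb, rfl, rfl⟩ := h
  · exact (CongGen.of hb).add u
  · exact (CongGen.of hb).symm.add u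

lemma CongGen.reflTransGen_chainStep (h : CongGen ρ x y) :
    Relation.ReflTransGen (ChainStep ρ) x y := by
  induction h with
  | of h => exact .single ⟨_, _, 0, .inl h, (add_zero _).symm, (add_zero _).symm⟩
  | refl => exact .refl
  | symm _ ih => exact Std.Symm.symm _ _ ih
  | trans _ _ ih₁ ih₂ => exact ih₁.trans ih₂
  | add u _ ih => exact ih.lift (· + u) fun _ _ h ↦ h.add u

/-- There is a `ρ`-chain from `x` to `y` along which the length never increases. -/
def Descends (ρ : Set ((Fin m → ℕ) × (Fin m → ℕ))) : (Fin m → ℕ) → (Fin m → ℕ) → Prop :=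
  Relation.ReflTransGen fun x y ↦ ChainStep ρ x y ∧ vlen y ≤ vlen x

lemma Descends.add (h : Descends ρ x y) (v : Fin m → ℕ) : Descends ρ (x + v) (y + v) :=
  h.lift (· + v) fun a b ⟨hab, hle⟩ ↦
    ⟨hab.add v, by simpa only [vlen_add] using Nat.add_le_add_right hle _⟩

lemma IsPres.map_eq_of_chainStep (hρ : IsPres π ρ) (h : ChainStep ρ x y) : π x = π y :=
  (hρ.2 x y).1 h.congGen

lemma IsPres.map_eq_of_reflTransGen (hρ : IsPres π ρ)
    (h : Relation.ReflTransGen (ChainStep ρ) x y) : π x = π y := by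
  rw [← Relation.reflTransGen_eq_self (r := (Eq : ℕ → ℕ → Prop))]
  exact h.lift π fun _ _ ↦ hρ.map_eq_of_chainStep

lemma IsPres.reflTransGen_chainStep (hρ : IsPres π ρ) (h : π x = π y) :
    Relation.ReflTransGen (ChainStep ρ) x y :=
  ((hρ.2 x y).2 h).reflTransGen_chainStep

end Chain

lemma exists_step_of_reflTransGen {α : Type*} {r : α → α → Prop} {x y : α} {P : α → Prop}
    (h : Relation.ReflTransGen r x y) (hx : P x) (hy : ¬ P y) : ∃ a b, r a b ∧ P a ∧ ¬ P b := by
  by_contra! hP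
  refine hy ?_
  clear hy
  induction h with
  | refl => exact hx
  | tail _ hab ih => exact hP _ _ hab ih

lemma exists_fin_chain_of_reflTransGen {α : Type*} {r : α → α → Prop} {x y : α}
    (h : Relation.ReflTransGen r x y) :
    ∃ (N : ℕ) (a : Fin (N + 1) → α),
      a 0 = x ∧ a (Fin.last N) = y ∧ ∀ i : Fin N, r (a i.castSucc) (a i.succ) := by
  suffices ∃ p : RelSeries {q : α × α | r q.1 q.2}, p.head = x ∧ p.last = y by
    obtain ⟨p, hx, hy⟩ := this
    exact ⟨p.length, p, hx, hy, p.step⟩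
  induction h with
  | refl => exact ⟨.singleton _ x, rfl, rfl⟩
  | @tail b c _ hbc ih =>
    obtain ⟨p, hx, rfl⟩ := ih
    exact ⟨p.snoc c hbc, (p.head_snoc c hbc).trans hx, p.last_snoc c hbc⟩

section Fiber

variable {m β : ℕ} {g : Fin m → ℕ} {s t : Fin m} {ρ : Set ((Fin m → ℕ) × (Fin m → ℕ))}
  {z z' : Fin m → ℕ}

/-- Any two factorizations of `β` over the generators `g` are joined by a `ρ`-chain along which the
length never increases, from the longer to the shorter one. -/
def FiberDescends (g : Fin m → ℕ) (ρ : Set ((Fin m → ℕ) × (Fin m → ℕ))) (β : ℕ) : Prop :=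
  ∀ z z', z ⬝ᵥ g = β → z' ⬝ᵥ g = β → vlen z' ≤ vlen z → Descends ρ z z'

lemma descends_of_shareAtom (hg : ∀ i, 0 < g i) (ih : ∀ γ < β, FiberDescends g ρ γ)
    (hz : z ⬝ᵥ g = β) (hz' : z' ⬝ᵥ g = β) (hle : vlen z' ≤ vlen z) (h : ShareAtom z z') :
    Descends ρ z z' := by
  obtain ⟨i, hi, hi'⟩ := h
  obtain ⟨x, rfl⟩ := exists_eq_add_single hi
  obtain ⟨x', rfl⟩ := exists_eq_add_single hi'
  rw [add_dotProduct, single_one_dotProduct] at hz hz'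
  rw [vlen_add, vlen_add, Nat.add_le_add_iff_right] at hle
  have := hg i
  exact (ih (x ⬝ᵥ g) (by omega) x x' rfl (by omega) hle).add _

lemma descends_of_exchangesTo {i : Fin m} (hg : ∀ i, 0 < g i)
    (ih : ∀ γ < β, FiberDescends g ρ γ) (hz : z ⬝ᵥ g = β) (hz' : z' ⬝ᵥ g = β)
    (hle : vlen z' ≤ vlen z) (h : ExchangesTo g i z) (h' : ExchangesTo g i z') :
    Descends ρ z z' := by
  obtain ⟨x, hlen, hx, hxi, hshare⟩ := h
  obtain ⟨x', hlen', hx', hxi', hshare'⟩ := h'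
  rw [hz] at hx
  rw [hz'] at hx'
  have hzx : Descends ρ z x := descends_of_shareAtom hg ih hz hx hlen.le hshare
  have hxx' : Descends ρ x x' := descends_of_shareAtom hg ih hx hx' (by omega) ⟨i, hxi, hxi'⟩
  have hx'z' : Descends ρ x' z' := descends_of_shareAtom hg ih hx' hz' hlen'.ge hshare'.symm
  exact (hzx.trans hxx').trans hx'z'

lemma IsPres.descends_of_forall_vlen_eq {π : (Fin m → ℕ) → ℕ} (hρ : IsPres π ρ)
    (hlen : ∀ w, π w = π z → vlen w = vlen z) (h : π z = π z') : Descends ρ z z' := by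
  have hchain := hρ.reflTransGen_chainStep h
  clear h
  induction hchain with
  | refl => exact .refl
  | @tail b c hzb hbc ih =>
    have hb : π b = π z := (hρ.map_eq_of_reflTransGen hzb).symm
    have hc : π c = π z := (hρ.map_eq_of_chainStep hbc).symm.trans hb
    exact ih.tail ⟨hbc, by rw [hlen b hb, hlen c hc]⟩

lemma IsPres.exists_chainStep_vlen_le_lt {π : (Fin m → ℕ) → ℕ} (hρ : IsPres π ρ)
    (h : π z = π z') {l : ℕ} (hz' : vlen z' ≤ l) (hz : l < vlen z) :
    ∃ x y, ChainStep ρ x y ∧ π x = π z ∧ π y = π z ∧ vlen y ≤ l ∧ l < vlen x := by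
  obtain ⟨x, y, hxy, ⟨hx, hlx⟩, hy⟩ := exists_step_of_reflTransGen
    (P := fun w ↦ π w = π z ∧ l < vlen w) (hρ.reflTransGen_chainStep h) ⟨rfl, hz⟩
    fun hl ↦ hz'.not_gt hl.2
  have hyz : π y = π z := (hρ.map_eq_of_chainStep hxy).symm.trans hx
  exact ⟨x, y, hxy, hx, hyz, not_lt.1 fun hly ↦ hy ⟨hyz, hly⟩, hlx⟩

lemma IsPres.fiberDescends (hs : ∀ i, g s ≤ g i) (ht : ∀ i, g i ≤ g t)
    (hg : (g t - g s) ^ 2 < g s) (hρ : IsPres (· ⬝ᵥ g) ρ) (β : ℕ) : FiberDescends g ρ β := by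
  induction β using Nat.strong_induction_on with | _ β ih => ?_
  have hpos (i : Fin m) : 0 < g i := (Nat.zero_le _).trans_lt (hg.trans_le (hs i))
  have via_max {x y w : Fin m → ℕ} (hx : x ⬝ᵥ g = β) (hy : y ⬝ᵥ g = β) (hw : w ⬝ᵥ g = β)
      (hyx : vlen y ≤ vlen x) (hxw : vlen x < vlen w) : Descends ρ x y :=
    descends_of_exchangesTo hpos ih hx hy hyx (exchangesTo_max hs ht hg (hx.trans hw.symm) hxw)
      (exchangesTo_max hs ht hg (hy.trans hw.symm) (hyx.trans_lt hxw))
  have via_min {x y w : Fin m → ℕ} (hx : x ⬝ᵥ g = β) (hy : y ⬝ᵥ g = β) (hw : w ⬝ᵥ g = β)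
      (hyx : vlen y ≤ vlen x) (hwy : vlen w < vlen y) : Descends ρ x y :=
    descends_of_exchangesTo hpos ih hx hy hyx
      (exchangesTo_min hs ht hg (hx.trans hw.symm) (hwy.trans_le hyx))
      (exchangesTo_min hs ht hg (hy.trans hw.symm) hwy)
  intro z z' hz hz' hle
  have hzz' : z ⬝ᵥ g = z' ⬝ᵥ g := hz.trans hz'.symm
  by_cases hmax : ∃ w, w ⬝ᵥ g = β ∧ vlen z < vlen w
  · obtain ⟨w, hw, hzw⟩ := hmax
    exact via_max hz hz' hw hle hzw
  by_cases hmin : ∃ w, w ⬝ᵥ g = β ∧ vlen w < vlen z'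
  · obtain ⟨w, hw, hwz'⟩ := hmin
    exact via_min hz hz' hw hle hwz'
  push Not at hmax hmin
  rcases hle.eq_or_lt with heq | hlt
  · exact hρ.descends_of_forall_vlen_eq
      (fun w hw ↦ le_antisymm (hmax w (hw.trans hz)) (heq ▸ hmin w (hw.trans hz))) hzz'
  · obtain ⟨x, y, hxy, hx, hy, hley, hltx⟩ := hρ.exists_chainStep_vlen_le_lt hzz' le_rfl hlt
    have hx : x ⬝ᵥ g = β := hx.trans hz
    have hy : y ⬝ᵥ g = β := hy.trans hz
    have hzx : Descends ρ z x := via_min hz hx hz' (hmax x hx) hltx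
    have hyz' : Descends ρ y z' := via_max hy hz' hz (hmin y hy) (hley.trans_lt hlt)
    exact (hzx.tail ⟨hxy, hley.trans hltx.le⟩).trans hyz'

end Fiber

theorem stmt9_general {m : ℕ} {g : Fin m → ℕ} {s t : Fin m} (hs : ∀ i, g s ≤ g i)
    (ht : ∀ i, g i ≤ g t) (hg : (g t - g s) ^ 2 < g s)
    {ρ : Set ((Fin m → ℕ) × (Fin m → ℕ))} (hρ : IsPres (· ⬝ᵥ g) ρ)
    {z z' : Fin m → ℕ} (h : z ⬝ᵥ g = z' ⬝ᵥ g) :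
    ∃ (N : ℕ) (a : Fin (N + 1) → Fin m → ℕ),
      a 0 = z ∧ a (Fin.last N) = z' ∧
      ((Monotone fun i ↦ vlen (a i)) ∨ (Antitone fun i ↦ vlen (a i))) ∧
      ∀ i : Fin N, ChainStep ρ (a i.castSucc) (a i.succ) := by
  have hfiber := hρ.fiberDescends hs ht hg (z ⬝ᵥ g)
  rcases le_total (vlen z') (vlen z) with hle | hle
  · obtain ⟨N, a, h0, hN, ha⟩ := exists_fin_chain_of_reflTransGen (hfiber z z' rfl h.symm hle)
    exact ⟨N, a, h0, hN, .inr (Fin.antitone_iff_succ_le.2 fun i ↦ (ha i).2), fun i ↦ (ha i).1⟩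
  · obtain ⟨N, a, h0, hN, ha⟩ := exists_fin_chain_of_reflTransGen
      (Relation.reflTransGen_swap.2 (hfiber z' z h.symm rfl hle))
    exact ⟨N, a, h0, hN, .inl (Fin.monotone_iff_le_succ.2 fun i ↦ (ha i).2),
      fun i ↦ (ha i).1.symm⟩

section Shifted

variable {k : ℕ} (n : ℕ) (r : Fin (k + 1) → ℕ)

/-- The generators `n, n + r_1, ..., n + r_k` of `M_n` as a vector, with `n` in position `0`. -/
def generators : Fin (k + 2) → ℕ := Fin.cons n fun i ↦ n + r i

lemma generators_zero : generators n r 0 = n := rfl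

lemma generators_last : generators n r (Fin.last (k + 1)) = n + r (Fin.last k) := rfl

lemma generators_zero_le (i : Fin (k + 2)) : generators n r 0 ≤ generators n r i := by
  cases i using Fin.cases with
  | zero => exact le_rfl
  | succ i => exact Nat.le_add_right ..

lemma generators_le_last {r : Fin (k + 1) → ℕ} (hr : Monotone r) (i : Fin (k + 2)) :
    generators n r i ≤ generators n r (Fin.last (k + 1)) := by
  cases i using Fin.cases with
  | zero => exact generators_zero_le ..
  | succ i => exact Nat.add_le_add_left (hr (Fin.le_last i)) n

lemma piM_eq_dotProduct_generators : piM k n r = (· ⬝ᵥ generators n r) :=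
  funext fun z ↦ (Fin.sum_univ_succ fun i ↦ z i * generators n r i).symm

end Shifted

/-- For `n > r_k²` with `M_n` primitive, any pair in `ker π_n` is connected by a
monotone `ρ`-chain, for any minimal presentation `ρ` of `M_n`. -/
theorem stmt9 (k n : ℕ) (r : Fin (k + 1) → ℕ) (hmono : StrictMono r) (hpos : 0 < r 0)
    (hn : r (Fin.last k) ^ 2 < n) (hprim : Primitive k n r)
    (ρ : Set ((Fin (k + 2) → ℕ) × (Fin (k + 2) → ℕ)))
    (hρ : IsMinPres (piM k n r) ρ)
    (z z' : Fin (k + 2) → ℕ) (h : piM k n r z = piM k n r z') :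
    ∃ (N : ℕ) (a : Fin (N + 1) → Fin (k + 2) → ℕ),
      a 0 = z ∧ a (Fin.last N) = z' ∧
      ((Monotone fun i => vlen (a i)) ∨ (Antitone fun i => vlen (a i))) ∧
      ∀ i : Fin N, ∃ b b' u, ((b, b') ∈ ρ ∨ (b', b) ∈ ρ) ∧
        a i.castSucc = b + u ∧ a i.succ = b' + u := by
  have hpres := hρ.1
  rw [piM_eq_dotProduct_generators] at hpres h
  exact stmt9_general (generators_zero_le n r) (generators_le_last n hmono.monotone)
    (by simpa only [generators_zero, generators_last, Nat.add_sub_cancel_left] using hn) hpres h
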